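/- Let f ∈ R be homogeneous of degree d and assume τ(f^{1−1/p}) ⊆ m and √τ(f^{1−1/p}) = m. Then δ(f) + d > −n(d−1); equivalently, M_e − (n+1)p^e + d > −n(d−1) for all e ≥ e_0. -/

import Mathlib

/-!
The bound reads `M_e ≥ (n + 1) (p^e - (d - 1))`, and it holds for every `e`.

Decomposing `f^(p-1)` over `R^p`, with a basis of `k` over `k^p`, shows that `τ = τ(f^{1-1/p})` is
generated by the images of `f^(p-1)` under Cartier maps. These are forms of degree at most
`d (p-1) / p`, hence at most `D = d - 1`, so the forms of degree `D` in `τ` have no common zero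
outside the origin. Over the algebraic closure, `n + 1` general linear combinations `G_0, …, G_n`
of them generate an ideal with radical `m`: prime avoidance raises the height by one for each
`G_i`, and the only homogeneous prime of height `n + 1` is `m`.

Let `g ∉ m^{[e]}` be a form of degree `t` with `g τ ⊆ m^{[e]}`, and put `q = p^e`, `Q = p^j`. Then
`g^Q (G_0^Q, …, G_n^Q) ⊆ m^{[e+j]}`. Since `(G)` contains all forms of large degree, `(G)^L`
contains all forms of degree `≥ D L + O(1)`, and `(G)^((n+1)Q+1) ⊆ (G_0^Q, …, G_n^Q)` by
pigeonhole; so `g^Q` multiplies all forms of degree `≥ (n+1) D Q + O(1)` into `m^{[e+j]}`. But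
`g^Q ∉ m^{[e+j]}`, so some monomial multiple of `g^Q` has a nonzero coefficient at the socle
monomial `∏ x_i^(qQ-1)`. Hence `(n+1) (qQ-1) - Q t ≤ (n+1) D Q + O(1)`, and `Q → ∞` gives
`(n+1) q ≤ t + (n+1) D`.
-/

open MvPolynomial

noncomputable section

/-- `I^{[e]}`-style bracket power: the ideal generated by `q`-th powers of elements of `I`. -/
def bracketPow {A : Type*} [CommRing A] (I : Ideal A) (q : ℕ) : Ideal A :=
  Ideal.span ((fun u => u ^ q) '' (I : Set A))

/-- The test ideal `τ(f^{1 - 1/p^e})`: the smallest ideal `a` with `f^{p^e - 1} ∈ a^{[e]}`. -/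
def testIdeal {A : Type*} [CommRing A] (p : ℕ) (f : A) (e : ℕ) : Ideal A :=
  sInf {a : Ideal A | f ^ (p ^ e - 1) ∈ bracketPow a (p ^ e)}

/-- The homogeneous maximal ideal `m = (x_0, ..., x_n)`. -/
def mxI (k : Type*) [Field k] (n : ℕ) : Ideal (MvPolynomial (Fin (n + 1)) k) :=
  Ideal.span (Set.range (X : Fin (n + 1) → MvPolynomial (Fin (n + 1)) k))

/-- The set of degrees of homogeneous elements of `(m^{[e]} : τ) \ m^{[e]}`. -/
def MeSet (k : Type*) [Field k] (n p : ℕ) (τ : Ideal (MvPolynomial (Fin (n + 1)) k))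
    (e : ℕ) : Set ℕ :=
  {d : ℕ | ∃ g : MvPolynomial (Fin (n + 1)) k,
    g ∈ (bracketPow (mxI k n) (p ^ e)).colon τ ∧
    g ∉ bracketPow (mxI k n) (p ^ e) ∧ g.IsHomogeneous d}

/-- `M_e`: the minimal degree of a homogeneous element of `(m^{[e]} : τ) \ m^{[e]}`. -/
def Me (k : Type*) [Field k] (n p : ℕ) (τ : Ideal (MvPolynomial (Fin (n + 1)) k))
    (e : ℕ) : ℕ :=
  sInf (MeSet k n p τ e)

/-- `e_0`: the least `e` with `τ ⊄ m^{[e]}`. -/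
def e0 (k : Type*) [Field k] (n p : ℕ) (τ : Ideal (MvPolynomial (Fin (n + 1)) k)) : ℕ :=
  sInf {e : ℕ | ¬ τ ≤ bracketPow (mxI k n) (p ^ e)}

/-! ### Bracket powers -/

section BracketPow

variable {A : Type*} [CommRing A]

theorem pow_mem_bracketPow {I : Ideal A} {u : A} (hu : u ∈ I) (q : ℕ) : u ^ q ∈ bracketPow I q :=
  Ideal.subset_span ⟨u, hu, rfl⟩

theorem bracketPow_le_self (I : Ideal A) {q : ℕ} (hq : q ≠ 0) : bracketPow I q ≤ I := by
  rw [bracketPow, Ideal.span_le]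
  rintro _ ⟨u, hu, rfl⟩
  exact I.pow_mem_of_mem hu q (Nat.pos_of_ne_zero hq)

theorem map_bracketPow_le {B : Type*} [CommRing B] (φ : A →+* B) (I : Ideal A) (q : ℕ) :
    (bracketPow I q).map φ ≤ bracketPow (I.map φ) q := by
  rw [bracketPow, Ideal.map_span, Ideal.span_le]
  rintro _ ⟨_, ⟨u, hu, rfl⟩, rfl⟩
  simpa using pow_mem_bracketPow (Ideal.mem_map_of_mem φ hu) q

theorem iSup_pow_card_mul_add_one_le {ι : Type*} (I : ι → Ideal A) (q : ℕ) (s : Finset ι) :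
    (⨆ i ∈ s, I i) ^ (s.card * q + 1) ≤ ⨆ i ∈ s, I i ^ q := by
  classical
  induction s using Finset.induction_on with
  | empty => simp
  | insert a s ha ih =>
    rw [Finset.iSup_insert, Finset.iSup_insert, Finset.card_insert_of_notMem ha,
      show (s.card + 1) * q + 1 = q + (s.card * q + 1) by ring]
    exact Ideal.sup_pow_add_le_pow_sup_pow.trans (sup_le_sup le_rfl ih)

/-- Pigeonhole: a product of more than `r * q` elements drawn from `r` generators is divisible by
the `q`-th power of one of them. -/
theorem span_range_pow_le_bracketPow {r : ℕ} (G : Fin r → A) (q : ℕ) :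
    Ideal.span (Set.range G) ^ (r * q + 1) ≤ bracketPow (Ideal.span (Set.range G)) q := by
  have h := iSup_pow_card_mul_add_one_le (fun i => Ideal.span {G i}) q Finset.univ
  simp only [Finset.mem_univ, iSup_pos, Finset.card_univ, Fintype.card_fin] at h
  rw [← Ideal.span_iUnion, Set.iUnion_singleton_eq_range] at h
  refine h.trans (iSup_le fun i => ?_)
  rw [Ideal.span_singleton_pow, Ideal.span_singleton_le_iff_mem]
  exact pow_mem_bracketPow (Ideal.subset_span (Set.mem_range_self i)) q

section Frobenius

variable (p : ℕ) [ExpChar A p]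

theorem bracketPow_eq_map_iterateFrobenius (I : Ideal A) (e : ℕ) :
    bracketPow I (p ^ e) = I.map (iterateFrobenius A p e) := rfl

theorem bracketPow_bracketPow (I : Ideal A) (e j : ℕ) :
    bracketPow (bracketPow I (p ^ e)) (p ^ j) = bracketPow I (p ^ (e + j)) := by
  simp only [bracketPow_eq_map_iterateFrobenius, Ideal.map_map, add_comm e j, iterateFrobenius_add]

variable {p} in
theorem pow_mem_colon_bracketPow {I J : Ideal A} {g : A} {e : ℕ}
    (hg : g ∈ (bracketPow I (p ^ e)).colon J) (j : ℕ) :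
    g ^ p ^ j ∈ (bracketPow I (p ^ (e + j))).colon (bracketPow J (p ^ j)) := by
  rw [bracketPow.eq_1 J, Ideal.colon_span, Submodule.mem_colon]
  rintro _ ⟨u, hu, rfl⟩
  rw [smul_eq_mul, ← mul_pow, ← bracketPow_bracketPow]
  exact pow_mem_bracketPow (Submodule.mem_colon.1 hg u hu) _

end Frobenius

end BracketPow

/-! ### Bracket powers of the ideal of the variables -/

section IdealOfVars

variable {σ R : Type*} [CommRing R]

theorem map_idealOfVars {S : Type*} [CommRing S] (φ : R →+* S) :
    (idealOfVars σ R).map (map φ) = idealOfVars σ S := by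
  simp [idealOfVars, Ideal.map_span, ← Set.range_comp, Function.comp_def]

section ExpChar

variable {p : ℕ} [ExpChar R p]

theorem mem_bracketPow_idealOfVars_iff {e : ℕ} {u : MvPolynomial σ R} :
    u ∈ bracketPow (idealOfVars σ R) (p ^ e) ↔
      ∀ a : σ →₀ ℕ, (∀ i, a i < p ^ e) → coeff a u = 0 := by
  have h : bracketPow (idealOfVars σ R) (p ^ e) = Ideal.span
      ((fun s => monomial s (1 : R)) '' Set.range fun i => Finsupp.single i (p ^ e)) := by
    rw [bracketPow_eq_map_iterateFrobenius, idealOfVars, Ideal.map_span, ← Set.range_comp,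
      ← Set.range_comp]
    congr 2
    ext1 i
    simp [iterateFrobenius_def, X_pow_eq_monomial]
  rw [h, mem_ideal_span_monomial_image]
  refine forall_congr' fun a => ?_
  rw [mem_support_iff, ← not_imp_not, not_not, imp_congr_left]
  simp

theorem coeff_smul_pow_expChar_pow (g : MvPolynomial σ R) (a : σ →₀ ℕ) (j : ℕ) :
    coeff (p ^ j • a) (g ^ p ^ j) = coeff a g ^ p ^ j := by
  rw [← map_iterateFrobenius_expand p g j, coeff_map,
    coeff_expand_smul (hp := (expChar_pow_pos R p j).ne'), iterateFrobenius_def]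

theorem mem_bracketPow_idealOfVars_of_pow_mem [IsReduced R] {e j : ℕ} {g : MvPolynomial σ R}
    (hg : g ^ p ^ j ∈ bracketPow (idealOfVars σ R) (p ^ (e + j))) :
    g ∈ bracketPow (idealOfVars σ R) (p ^ e) := by
  rw [mem_bracketPow_idealOfVars_iff] at hg ⊢
  intro a ha
  have h : coeff a g ^ p ^ j = 0 := by
    rw [← coeff_smul_pow_expChar_pow]
    refine hg _ fun i => ?_
    rw [pow_add, mul_comm]
    exact Nat.mul_lt_mul_of_pos_left (ha i) (expChar_pow_pos R p j)
  exact eq_zero_of_pow_eq_zero h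

theorem mem_bracketPow_idealOfVars_of_map_mem {S : Type*} [CommRing S] [ExpChar S p] {φ : R →+* S}
    (hφ : Function.Injective φ) {e : ℕ} {g : MvPolynomial σ R}
    (hg : map φ g ∈ bracketPow (idealOfVars σ S) (p ^ e)) :
    g ∈ bracketPow (idealOfVars σ R) (p ^ e) := by
  rw [mem_bracketPow_idealOfVars_iff] at hg ⊢
  intro a ha
  exact (map_eq_zero_iff φ hφ).1 ((coeff_map φ g a).symm.trans (hg a ha))

end ExpChar

section Socle

variable [Fintype σ]

variable (σ) in
/-- The exponent `(q - 1, …, q - 1)` of the monomial `∏ x_i ^ (q - 1)` that generates the socle of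
`R / (x_i ^ q)`. -/
def socleExponent (q : ℕ) : σ →₀ ℕ := Finsupp.equivFunOnFinite.symm fun _ => q - 1

theorem degree_socleExponent (q : ℕ) : (socleExponent σ q).degree = Fintype.card σ * (q - 1) := by
  simp [socleExponent, Finsupp.degree_eq_sum]

theorem le_socleExponent_iff {q : ℕ} (hq : 0 < q) {a : σ →₀ ℕ} :
    a ≤ socleExponent σ q ↔ ∀ i, a i < q :=
  forall_congr' fun _ => Nat.le_sub_one_iff_lt hq

variable {p : ℕ} [ExpChar R p]

theorem monomial_socleExponent_notMem [Nontrivial R] (e : ℕ) :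
    monomial (socleExponent σ (p ^ e)) (1 : R) ∉ bracketPow (idealOfVars σ R) (p ^ e) := by
  intro h
  classical
  simpa [coeff_monomial] using
    mem_bracketPow_idealOfVars_iff.1 h _ ((le_socleExponent_iff (expChar_pow_pos R p e)).1 le_rfl)

theorem monomial_socleExponent_mem_colon (e : ℕ) :
    monomial (socleExponent σ (p ^ e)) (1 : R) ∈
      (bracketPow (idealOfVars σ R) (p ^ e)).colon (idealOfVars σ R) := by
  rw [idealOfVars, Ideal.colon_span, Submodule.mem_colon]
  rintro _ ⟨i, rfl⟩
  classical
  rw [smul_eq_mul, X, monomial_mul, ← idealOfVars, mem_bracketPow_idealOfVars_iff]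
  intro a ha
  rw [coeff_monomial, if_neg]
  rintro rfl
  have hi := ha i
  simp only [Finsupp.add_apply, Finsupp.single_eq_same, socleExponent,
    Finsupp.equivFunOnFinite_symm_apply_apply] at hi
  omega

/-- A monomial multiple of `h` has a nonzero coefficient at the socle monomial, so the complementary
monomial does not lie in `m ^ B`. -/
theorem card_mul_lt_of_mem_colon_pow {e t B : ℕ} {h : MvPolynomial σ R} (ht : h.IsHomogeneous t)
    (hm : h ∉ bracketPow (idealOfVars σ R) (p ^ e))
    (hB : h ∈ (bracketPow (idealOfVars σ R) (p ^ e)).colon (idealOfVars σ R ^ B : Ideal _)) :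
    Fintype.card σ * (p ^ e - 1) < t + B := by
  rw [mem_bracketPow_idealOfVars_iff] at hm
  push Not at hm
  obtain ⟨a, ha, hca⟩ := hm
  have ha_le : a ≤ socleExponent σ (p ^ e) := (le_socleExponent_iff (expChar_pow_pos R p e)).2 ha
  let b := socleExponent σ (p ^ e) - a
  have hab : a + b = socleExponent σ (p ^ e) := add_tsub_cancel_of_le ha_le
  have hb : b.degree < B := by
    by_contra! hle
    have := nontrivial_of_ne _ _ hca
    have hmem := Submodule.mem_colon.1 hB (monomial b 1)
      ((monomial_mem_pow_idealOfVars_iff _ _ one_ne_zero).2 hle)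
    have hcoeff := mem_bracketPow_idealOfVars_iff.1 hmem (a + b)
      ((le_socleExponent_iff (expChar_pow_pos R p e)).1 hab.le)
    exact hca (by simpa using hcoeff)
  have hat : a.degree = t := by
    by_contra hne
    exact hca (ht.coeff_eq_zero hne)
  rw [← degree_socleExponent, ← hab, map_add, hat]
  omega

end Socle

end IdealOfVars

/-! ### Ideals generated by forms -/

section Forms

variable {σ R : Type*} [CommRing R]

attribute [local instance] MvPolynomial.gradedAlgebra

theorem homogeneousComponent_add_mul {D : ℕ} {v : MvPolynomial σ R} (hv : v.IsHomogeneous D)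
    (N : ℕ) (c : MvPolynomial σ R) :
    homogeneousComponent (N + D) (c * v) = homogeneousComponent N c * v := by
  have h := DirectSum.coe_decompose_mul_add_of_right_mem (homogeneousSubmodule σ R) (i := N)
    (a := c) hv
  exact (decomposition.decompose'_apply _ _).symm.trans
    (h.trans (congrArg (· * v) (decomposition.decompose'_apply c N)))

theorem mem_idealOfVars_pow_of_isHomogeneous {N : ℕ} {u : MvPolynomial σ R}
    (hu : u.IsHomogeneous N) : u ∈ idealOfVars σ R ^ N := by
  rw [mem_pow_idealOfVars_iff']
  exact fun a ha => hu.coeff_eq_zero ha.ne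

theorem mem_idealOfVars_pow_mul_span_of_isHomogeneous {S : Set (MvPolynomial σ R)} {N D : ℕ}
    (hS : ∀ v ∈ S, v.IsHomogeneous D) {u : MvPolynomial σ R} (hu : u.IsHomogeneous (N + D))
    (hmem : u ∈ Ideal.span S) : u ∈ idealOfVars σ R ^ N * Ideal.span S := by
  rw [← homogeneousComponent_eq_self hu]
  clear hu
  induction hmem using Submodule.closure_induction with
  | zero => simp
  | add x y _ _ hx hy => rw [map_add]; exact add_mem hx hy
  | smul_mem c v hv =>
    rw [smul_eq_mul, homogeneousComponent_add_mul (hS v hv)]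
    exact Ideal.mul_mem_mul
      (mem_idealOfVars_pow_of_isHomogeneous (homogeneousComponent_isHomogeneous N c))
      (Ideal.subset_span hv)

theorem idealOfVars_pow_le_span_pow {S : Set (MvPolynomial σ R)} {D s : ℕ}
    (hS : ∀ v ∈ S, v.IsHomogeneous D) (hs : idealOfVars σ R ^ s ≤ Ideal.span S) (L : ℕ) :
    idealOfVars σ R ^ (s + D * L) ≤ Ideal.span S ^ L := by
  induction L with
  | zero => simp
  | succ L ih =>
    rw [Nat.mul_succ, ← add_assoc, pow_idealOfVars_eq_span, Ideal.span_le]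
    rintro _ ⟨a, ha, rfl⟩
    have hhom := isHomogeneous_monomial (1 : R) ha
    have hmem : monomial a (1 : R) ∈ Ideal.span S :=
      hs (Ideal.pow_le_pow_right (by omega) (mem_idealOfVars_pow_of_isHomogeneous hhom))
    exact Ideal.mul_mono_left ih (mem_idealOfVars_pow_mul_span_of_isHomogeneous hS hhom hmem)

theorem idealOfVars_pow_mul_span_le {T : Set (MvPolynomial σ R)} {D : ℕ}
    (hT : ∀ v ∈ T, ∃ N ≤ D, v.IsHomogeneous N) :
    idealOfVars σ R ^ D * Ideal.span T ≤ Ideal.span {v ∈ Ideal.span T | v.IsHomogeneous D} := by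
  suffices idealOfVars σ R ^ D ≤
      (Ideal.span {v ∈ Ideal.span T | v.IsHomogeneous D}).colon (Ideal.span T : Set _) from
    Ideal.mul_le.2 fun u hu v hv => Submodule.mem_colon.1 (this hu) v hv
  rw [Ideal.colon_span]
  refine fun u hu => Submodule.mem_colon.2 fun v hv => ?_
  obtain ⟨N, hN, hvN⟩ := hT v hv
  suffices idealOfVars σ R ^ (D - N) ≤
      (Ideal.span {v ∈ Ideal.span T | v.IsHomogeneous D}).colon {v} from
    Submodule.mem_colon.1 (this (Ideal.pow_le_pow_right (Nat.sub_le D N) hu)) v rfl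
  rw [pow_idealOfVars_eq_span, Ideal.span_le]
  rintro _ ⟨a, ha, rfl⟩
  refine Submodule.mem_colon_singleton.2 (Ideal.subset_span
    ⟨Ideal.mul_mem_left _ _ (Ideal.subset_span hv), ?_⟩)
  simpa [Nat.sub_add_cancel hN] using (isHomogeneous_monomial (1 : R) ha).mul hvN

theorem idealOfVars_le_radical_span_isHomogeneous {T : Set (MvPolynomial σ R)} {D : ℕ}
    (hT : ∀ v ∈ T, ∃ N ≤ D, v.IsHomogeneous N)
    (hrad : idealOfVars σ R ≤ (Ideal.span T).radical) :
    idealOfVars σ R ≤ (Ideal.span {v ∈ Ideal.span T | v.IsHomogeneous D}).radical := by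
  refine le_trans ?_ (Ideal.radical_mono (idealOfVars_pow_mul_span_le hT))
  rw [Ideal.radical_mul]
  exact le_inf (fun u hu => ⟨D, Ideal.pow_mem_pow hu D⟩) hrad

end Forms

/-! ### The degree bound for `r` forms -/

/-- Put `Q = p ^ j`. The form `g ^ Q` of degree `t * Q` lies outside `m^{[e+j]}`, and it multiplies
`(G)^{[j]}`, hence all forms of degree `D * (r * Q) + O(1)`, into `m^{[e+j]}`. Compare degrees at
the socle and let `Q → ∞`. -/
theorem card_mul_pow_le_of_mem_colon_range {σ k : Type*} [Fintype σ] [Field k] {p : ℕ}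
    [Fact p.Prime] [CharP k p] {r D e t : ℕ} {G : Fin r → MvPolynomial σ k}
    (hG : ∀ i, (G i).IsHomogeneous D)
    (hrad : idealOfVars σ k ≤ (Ideal.span (Set.range G)).radical)
    {g : MvPolynomial σ k} (hg : g.IsHomogeneous t)
    (hgm : g ∉ bracketPow (idealOfVars σ k) (p ^ e))
    (hgG : g ∈ (bracketPow (idealOfVars σ k) (p ^ e)).colon (Set.range G)) :
    Fintype.card σ * p ^ e ≤ t + r * D := by
  obtain ⟨s, hs⟩ := Ideal.exists_pow_le_of_le_radical_of_fg hrad (idealOfVars_fg σ k)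
  have hpow (Q : ℕ) : idealOfVars σ k ^ (s + D * (r * Q + 1)) ≤
      bracketPow (Ideal.span (Set.range G)) Q :=
    (idealOfVars_pow_le_span_pow (Set.forall_mem_range.2 hG) hs _).trans
      (span_range_pow_le_bracketPow G Q)
  rw [← Ideal.colon_span] at hgG
  have hbound (j : ℕ) :
      Fintype.card σ * (p ^ (e + j) - 1) < t * p ^ j + (s + D * (r * p ^ j + 1)) :=
    card_mul_lt_of_mem_colon_pow (hg.pow _) (mt mem_bracketPow_idealOfVars_of_pow_mem hgm)
      (Submodule.colon_mono le_rfl (hpow _) (pow_mem_colon_bracketPow hgG j))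
  obtain ⟨j, hj⟩ := pow_unbounded_of_one_lt (Fintype.card σ + s + D) (Fact.out : p.Prime).one_lt
  have hlt : Fintype.card σ * p ^ e * p ^ j < (t + r * D + 1) * p ^ j := by
    have h := hbound j
    rw [Nat.mul_sub_one, pow_add] at h
    calc Fintype.card σ * p ^ e * p ^ j
        < t * p ^ j + (s + D * (r * p ^ j + 1)) + Fintype.card σ := by
          rw [mul_assoc]; omega
      _ = (t + r * D) * p ^ j + (Fintype.card σ + s + D) := by ring
      _ ≤ (t + r * D + 1) * p ^ j := by rw [add_one_mul]; omega
  exact Nat.lt_succ_iff.1 (Nat.lt_of_mul_lt_mul_right hlt)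

/-! ### General members of a linear system -/

section GeneralMember

variable {k A : Type*} [Field k] [Infinite k]

theorem exists_mem_forall_notMem_of_finite [AddCommGroup A] [Module k A] {V : Submodule k A}
    {𝒲 : Set (Submodule k A)} (hfin : 𝒲.Finite) (h𝒲 : ∀ W ∈ 𝒲, ¬ V ≤ W) :
    ∃ v ∈ V, ∀ W ∈ 𝒲, v ∉ W := by
  by_contra! hcover
  have := hfin.to_subtype
  obtain ⟨⟨W, hW⟩, htop⟩ := Subspace.exists_eq_top_of_iUnion_eq_univ
    (p := fun W : 𝒲 => W.1.submoduleOf V) <| Set.eq_univ_iff_forall.2 fun ⟨v, hv⟩ =>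
      let ⟨W, hW, hvW⟩ := hcover v hv
      Set.mem_iUnion.2 ⟨⟨W, hW⟩, hvW⟩
  exact h𝒲 W hW (Submodule.submoduleOf_eq_top.1 htop)

/-- Each new member is chosen outside the finitely many minimal primes of the ideal of the previous
ones that do not contain `m`. -/
theorem exists_fin_forall_isPrime_le_or_le_height [CommRing A] [IsNoetherianRing A] [Algebra k A]
    {V : Submodule k A} {m : Ideal A} (hV : m ≤ (Ideal.span (V : Set A)).radical) (j : ℕ) :
    ∃ G : Fin j → A, (∀ i, G i ∈ V) ∧
      ∀ P : Ideal A, P.IsPrime → Ideal.span (Set.range G) ≤ P → m ≤ P ∨ (j : ℕ∞) ≤ P.height := by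
  induction j with
  | zero => exact ⟨Fin.elim0, fun i => i.elim0, fun P _ _ => Or.inr (by simp)⟩
  | succ j ih =>
    obtain ⟨G, hGV, hG⟩ := ih
    obtain ⟨v, hvV, hv⟩ : ∃ v ∈ V,
        ∀ P ∈ (Ideal.span (Set.range G)).minimalPrimes, ¬ m ≤ P → v ∉ P := by
      have hfin := ((Ideal.finite_minimalPrimes_of_isNoetherianRing A
        (Ideal.span (Set.range G))).subset (Set.sep_subset _ fun P => ¬ m ≤ P)).image
          (Submodule.restrictScalars k)
      obtain ⟨v, hvV, hv⟩ := exists_mem_forall_notMem_of_finite hfin (V := V) (by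
        rintro _ ⟨P, ⟨hP, hmP⟩, rfl⟩ hVP
        exact hmP (hV.trans (hP.isPrime.radical_le_iff.2 (Ideal.span_le.2 hVP))))
      exact ⟨v, hvV, fun P hP hmP => hv _ ⟨P, ⟨hP, hmP⟩, rfl⟩⟩
    refine ⟨Fin.cons v G, Fin.cases hvV hGV, fun P hP hle => ?_⟩
    rw [Fin.range_cons, Ideal.span_insert, sup_le_iff, Ideal.span_singleton_le_iff_mem] at hle
    obtain ⟨hvP, hGP⟩ := hle
    obtain ⟨P₀, hP₀, hP₀P⟩ := Ideal.exists_minimalPrimes_le hGP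
    have := hP₀.isPrime
    refine or_iff_not_imp_left.2 fun hmP => ?_
    have hmP₀ : ¬ m ≤ P₀ := fun h => hmP (h.trans hP₀P)
    have hlt : P₀ < P := lt_of_le_of_ne hP₀P fun h => hv P₀ hP₀ hmP₀ (h ▸ hvP)
    have hheight := (hG P₀ this hP₀.1.2).resolve_left hmP₀
    push_cast
    exact (add_le_add_left hheight 1).trans (Ideal.height_add_one_le_of_lt_of_isPrime hlt)

end GeneralMember

section SystemOfParameters

variable {σ k : Type*} [Field k]

attribute [local instance] MvPolynomial.gradedAlgebra

variable (σ k) in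
theorem idealOfVars_ne_top : idealOfVars σ k ≠ ⊤ := by
  rw [Ideal.ne_top_iff_one, ← pow_one (idealOfVars σ k), ← C_1, C_mem_pow_idealOfVars_iff]
  simp

theorem le_idealOfVars_of_isHomogeneous {P : Ideal (MvPolynomial σ k)}
    (hP : P.IsHomogeneous (homogeneousSubmodule σ k)) (hne : P ≠ ⊤) : P ≤ idealOfVars σ k := by
  intro u hu
  have hu₀ : C (coeff 0 u) ∈ P := by
    simpa using homogeneousComponent_mem_of_mem hP hu 0
  have hcoeff : coeff 0 u = 0 := by
    by_contra hunit
    exact hne (P.eq_top_of_isUnit_mem hu₀ ((isUnit_iff_ne_zero.2 hunit).map C))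
  rw [← pow_one (idealOfVars σ k), mem_pow_idealOfVars_iff']
  intro a ha
  rwa [(Finsupp.degree_eq_zero_iff a).1 (Nat.lt_one_iff.1 ha)]

theorem idealOfVars_le_of_card_le_height [Fintype σ] {P : Ideal (MvPolynomial σ k)} [P.IsPrime]
    (hP : P.IsHomogeneous (homogeneousSubmodule σ k)) (hheight : Fintype.card σ ≤ P.height) :
    idealOfVars σ k ≤ P := by
  have hdim : ringKrullDim (MvPolynomial σ k) = (Fintype.card σ : ℕ∞) := by
    simp [MvPolynomial.ringKrullDim_of_isNoetherianRing]
  have : FiniteRingKrullDim (MvPolynomial σ k) :=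
    finiteRingKrullDim_iff_ne_bot_and_top.2 <| by
      rw [hdim]
      exact ⟨WithBot.coe_ne_bot, WithBot.coe_injective.ne (ENat.natCast_ne_top _)⟩
  have hmax : P.IsMaximal := Ideal.isMaximal_of_height_eq_ringKrullDim <|
    (Ideal.height_le_ringKrullDim_of_ne_top (Ideal.IsPrime.ne_top')).antisymm
      (hdim.trans_le (WithBot.coe_le_coe.2 hheight))
  exact (hmax.eq_of_le (idealOfVars_ne_top σ k)
    (le_idealOfVars_of_isHomogeneous hP hmax.ne_top)).ge

/-- A prime containing a homogeneous ideal contains a homogeneous prime between them, and the only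
homogeneous prime of height `card σ` is `m`. -/
theorem exists_fin_card_idealOfVars_le_radical [Fintype σ] [Infinite k] {D : ℕ}
    {V : Submodule k (MvPolynomial σ k)} (hVD : ∀ v ∈ V, v.IsHomogeneous D)
    (hV : idealOfVars σ k ≤ (Ideal.span (V : Set (MvPolynomial σ k))).radical) :
    ∃ G : Fin (Fintype.card σ) → MvPolynomial σ k, (∀ i, G i ∈ V) ∧
      idealOfVars σ k ≤ (Ideal.span (Set.range G)).radical := by
  obtain ⟨G, hGV, hG⟩ := exists_fin_forall_isPrime_le_or_le_height hV (Fintype.card σ)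
  refine ⟨G, hGV, ?_⟩
  have hI : (Ideal.span (Set.range G)).IsHomogeneous (homogeneousSubmodule σ k) := by
    refine Ideal.homogeneous_span _ _ ?_
    rintro _ ⟨i, rfl⟩
    exact ⟨D, hVD _ (hGV i)⟩
  rw [Ideal.radical_eq_sInf]
  refine le_sInf ?_
  rintro P ⟨hIP, hP⟩
  let P' := P.homogeneousCore (homogeneousSubmodule σ k)
  have hP' : P'.toIdeal.IsPrime := hP.homogeneousCore
  have hIP' : Ideal.span (Set.range G) ≤ P'.toIdeal := by
    rw [← hI.toIdeal_homogeneousCore_eq_self]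
    exact Ideal.homogeneousCore_mono _ hIP
  refine le_trans ?_ (Ideal.toIdeal_homogeneousCore_le (homogeneousSubmodule σ k) P)
  exact (hG P'.toIdeal hP' hIP').elim id (idealOfVars_le_of_card_le_height P'.isHomogeneous)

end SystemOfParameters

/-- After base change to the algebraic closure, `card σ` general linear combinations of the given
forms already have no common zero outside the origin. -/
theorem card_mul_pow_le_of_mem_colon {σ k : Type*} [Fintype σ] [Field k] {p : ℕ} [Fact p.Prime]
    [CharP k p] {D e t : ℕ} {S : Set (MvPolynomial σ k)} (hS : ∀ v ∈ S, v.IsHomogeneous D)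
    (hrad : idealOfVars σ k ≤ (Ideal.span S).radical)
    {g : MvPolynomial σ k} (hg : g.IsHomogeneous t)
    (hgm : g ∉ bracketPow (idealOfVars σ k) (p ^ e))
    (hgS : g ∈ (bracketPow (idealOfVars σ k) (p ^ e)).colon S) :
    Fintype.card σ * p ^ e ≤ t + Fintype.card σ * D := by
  let K := AlgebraicClosure k
  have : CharP K p := charP_of_injective_algebraMap (algebraMap k K).injective p
  let φ : MvPolynomial σ k →+* MvPolynomial σ K := map (algebraMap k K)
  have hφm : (idealOfVars σ k).map φ = idealOfVars σ K := map_idealOfVars (algebraMap k K)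
  let V : Submodule K (MvPolynomial σ K) := Submodule.span K (φ '' S)
  have hVD : V ≤ homogeneousSubmodule σ K D := by
    refine Submodule.span_le.2 ?_
    rintro _ ⟨v, hv, rfl⟩
    exact (hS v hv).map _
  have hspanV : Ideal.span (V : Set (MvPolynomial σ K)) = Ideal.span (φ '' S) :=
    Submodule.span_span_of_tower ..
  have hV : idealOfVars σ K ≤ (Ideal.span (V : Set (MvPolynomial σ K))).radical := by
    rw [hspanV, ← Ideal.map_span, ← hφm]
    exact (Ideal.map_mono hrad).trans (Ideal.map_radical_le φ)
  obtain ⟨G, hGV, hG⟩ := exists_fin_card_idealOfVars_le_radical hVD hV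
  have hgV : φ g ∈ (bracketPow (idealOfVars σ K) (p ^ e)).colon (V : Set (MvPolynomial σ K)) := by
    rw [← Ideal.colon_span, hspanV, Ideal.colon_span, Submodule.mem_colon]
    rintro _ ⟨v, hv, rfl⟩
    rw [← hφm, smul_eq_mul, ← map_mul]
    exact map_bracketPow_le φ _ _ (Ideal.mem_map_of_mem φ (Submodule.mem_colon.1 hgS v hv))
  exact card_mul_pow_le_of_mem_colon_range (fun i => hVD (hGV i)) hG (hg.map _)
    (mt (mem_bracketPow_idealOfVars_of_map_mem (algebraMap k K).injective) hgm)
    (Submodule.colon_mono le_rfl (Set.range_subset_iff.2 hGV) hgV)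

/-! ### Cartier maps and generators of test ideals -/

section Cartier

/-- A `q⁻¹`-linear map for `q = p ^ e`: an additive map with `φ (c ^ q * x) = c * φ x`. Such maps
send `I^{[e]}` into `I`. -/
def IsCartierLinear {A : Type*} [CommRing A] (q : ℕ) (φ : A →+ A) : Prop :=
  ∀ c x, φ (c ^ q * x) = c * φ x

theorem IsCartierLinear.map_mem_of_mem_bracketPow {A : Type*} [CommRing A] {q : ℕ} {φ : A →+ A}
    (hφ : IsCartierLinear q φ) {I : Ideal A} {x : A} (hx : x ∈ bracketPow I q) : φ x ∈ I := by
  induction hx using Submodule.closure_induction with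
  | zero => simp
  | add x y _ _ hx hy => simpa using add_mem hx hy
  | smul_mem r x hx =>
    obtain ⟨u, hu, rfl⟩ := hx
    rw [smul_eq_mul, mul_comm, hφ]
    exact I.mul_mem_right _ hu

theorem IsCartierLinear.map_mem_testIdeal {A : Type*} [CommRing A] {p e : ℕ} {φ : A →+ A}
    (hφ : IsCartierLinear (p ^ e) φ) (f : A) : φ (f ^ (p ^ e - 1)) ∈ testIdeal p f e :=
  Ideal.mem_sInf.2 fun _ hI => hφ.map_mem_of_mem_bracketPow hI

/-- Take for `b` a basis of `k` over its subfield of `p ^ e`-th powers and for `l i` the `p ^ e`-th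
root of the `i`-th coordinate function. -/
theorem exists_isCartierLinear_eq_sum.{u} (k : Type u) [Field k] (p e : ℕ) [ExpChar k p]
    (T : Finset k) :
    ∃ (ι : Type u) (B : Finset ι) (b : ι → k) (l : ι → k →+ k),
      (∀ i, IsCartierLinear (p ^ e) (l i)) ∧ ∀ x ∈ T, x = ∑ i ∈ B, b i * l i x ^ p ^ e := by
  classical
  let F := (iterateFrobenius k p e).fieldRange
  let ρ : k ≃+* F := RingEquiv.ofBijective (iterateFrobenius k p e).rangeRestrictField
    ⟨RingHom.injective _, fun ⟨_, c, hc⟩ => ⟨c, Subtype.ext hc⟩⟩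
  have hρ (c : k) : (ρ c : k) = c ^ p ^ e := rfl
  let b := Module.Basis.ofVectorSpace F k
  refine ⟨_, T.biUnion fun x => (b.repr x).support, b,
    fun i => ρ.symm.toAddMonoidHom.comp (b.coord i).toAddMonoidHom, fun i c x => ?_,
    fun x hx => ?_⟩
  · change ρ.symm (b.repr (ρ c • x) i) = c * ρ.symm (b.repr x i)
    simp
  · calc x = ∑ i ∈ (b.repr x).support, b.repr x i • b i := (b.linearCombination_repr x).symm
      _ = ∑ i ∈ T.biUnion fun x => (b.repr x).support, b.repr x i • b i :=
        Finset.sum_subset (Finset.subset_biUnion_of_mem (fun x => (b.repr x).support) hx)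
          fun i _ hi => by rw [Finsupp.notMem_support_iff.1 hi, zero_smul]
      _ = _ := Finset.sum_congr rfl fun i _ => by
        change _ = b i * ρ.symm (b.repr x i) ^ p ^ e
        rw [← hρ, ρ.apply_symm_apply, mul_comm]
        rfl

variable {σ R : Type*} [CommRing R]

theorem smul_add_right_injective (q : ℕ) [NeZero q] (a : σ →₀ ℕ) :
    Function.Injective fun m : σ →₀ ℕ => q • m + a :=
  (add_left_injective a).comp (smul_right_injective _ (NeZero.ne q))

/-- The map `∑ c_s x ^ s ↦ ∑ l (c_{q m + a}) x ^ m`, which is `q⁻¹`-linear if `l` is and all entries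
of `a` are less than `q`. -/
def cartierMap (q : ℕ) [NeZero q] (a : σ →₀ ℕ) (l : R →+ R) :
    MvPolynomial σ R →+ MvPolynomial σ R :=
  (AddMonoidAlgebra.coeffAddEquiv (R := R) (M := σ →₀ ℕ)).symm.toAddMonoidHom.comp <|
    (Finsupp.mapRange.addMonoidHom l).comp <|
      (Finsupp.comapDomain.addMonoidHom (smul_add_right_injective q a)).comp
        AddMonoidAlgebra.coeffAddEquiv.toAddMonoidHom

@[simp]
theorem coeff_cartierMap (q : ℕ) [NeZero q] (a : σ →₀ ℕ) (l : R →+ R) (v : MvPolynomial σ R)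
    (m : σ →₀ ℕ) : coeff m (cartierMap q a l v) = l (coeff (q • m + a) v) := rfl

theorem isHomogeneous_cartierMap {q : ℕ} [NeZero q] (a : σ →₀ ℕ) (l : R →+ R) {N : ℕ}
    {v : MvPolynomial σ R} (hv : v.IsHomogeneous N) :
    (cartierMap q a l v).IsHomogeneous ((N - a.degree) / q) := by
  intro m hm
  rw [coeff_cartierMap] at hm
  have hdeg : (q • m + a).degree = N := by
    by_contra hne
    exact hm (by rw [hv.coeff_eq_zero hne, map_zero])
  rw [← hdeg]
  simp [← Finsupp.degree_eq_weight_one, Pi.one_def, Nat.mul_div_cancel_left _ (NeZero.pos q)]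

theorem smul_le_smul_add_iff {q : ℕ} {a : σ →₀ ℕ} (ha : ∀ i, a i < q) {r m : σ →₀ ℕ} :
    q • r ≤ q • m + a ↔ r ≤ m := by
  refine ⟨fun h i => ?_, fun h => (nsmul_le_nsmul_right h q).trans le_self_add⟩
  have hi : q * r i ≤ q * m i + a i := h i
  exact Nat.lt_succ_iff.1 (Nat.lt_of_mul_lt_mul_left
    (hi.trans_lt ((Nat.add_lt_add_left (ha i) _).trans_eq (Nat.mul_succ q (m i)).symm)))

variable {p e : ℕ} [Fact p.Prime]

theorem isCartierLinear_cartierMap [CharP R p] {a : σ →₀ ℕ} (ha : ∀ i, a i < p ^ e) {l : R →+ R}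
    (hl : IsCartierLinear (p ^ e) l) : IsCartierLinear (p ^ e) (cartierMap (p ^ e) a l) := by
  intro u v
  induction u using MvPolynomial.induction_on' with
  | add u₁ u₂ h₁ h₂ => rw [add_pow_expChar_pow, add_mul, map_add, h₁, h₂, add_mul]
  | monomial r c =>
    ext m
    rw [coeff_cartierMap, monomial_pow, coeff_monomial_mul', coeff_monomial_mul',
      coeff_cartierMap, apply_ite l, hl, map_zero]
    refine if_ctx_congr (smul_le_smul_add_iff ha) (fun hrm => ?_) fun _ => rfl
    obtain ⟨m, rfl⟩ := exists_add_of_le hrm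
    rw [smul_add, add_assoc, add_tsub_cancel_left, add_tsub_cancel_left]

theorem coeff_smul_add_monomial_mul_pow [CharP R p] {a a' : σ →₀ ℕ} (ha : ∀ i, a i < p ^ e)
    (ha' : ∀ i, a' i < p ^ e) (c : R) (w : MvPolynomial σ R) (m : σ →₀ ℕ) :
    coeff (p ^ e • m + a) (monomial a' c * w ^ p ^ e) =
      open Classical in if a' = a then c * coeff m w ^ p ^ e else 0 := by
  rw [coeff_monomial_mul']
  split_ifs with hle heq heq
  · subst heq
    rw [add_tsub_cancel_right, coeff_smul_pow_expChar_pow]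
  · obtain ⟨i, hi⟩ := DFunLike.ne_iff.1 heq
    rw [← map_iterateFrobenius_expand p w e, coeff_map, coeff_expand_of_not_dvd _ (i := i),
      map_zero, mul_zero]
    intro hdvd
    have hmod : a' i ≡ p ^ e * m i + a i [MOD p ^ e] := (Nat.modEq_iff_dvd' (hle i)).2 hdvd
    refine hi (Nat.ModEq.eq_of_lt_of_lt ?_ (ha' i) (ha i))
    exact hmod.trans (Nat.modEq_iff_dvd.2 ⟨-m i, by push_cast; ring⟩)
  · exact (hle (heq ▸ le_add_self)).elim
  · rfl

theorem exists_eq_smul_add {q : ℕ} (hq : 0 < q) (s : σ →₀ ℕ) :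
    ∃ m a : σ →₀ ℕ, (∀ i, a i < q) ∧ s = q • m + a := by
  refine ⟨s.mapRange (· / q) (Nat.zero_div q), s.mapRange (· % q) (Nat.zero_mod q),
    fun i => ?_, ?_⟩
  · simpa using Nat.mod_lt _ hq
  · ext i
    simp [Nat.div_add_mod]

theorem eq_sum_monomial_mul_cartierMap_pow [CharP R p] [Fintype σ] [DecidableEq σ] {ι : Type*}
    {B : Finset ι} {b : ι → R} {l : ι → R →+ R} {v : MvPolynomial σ R}
    (hv : ∀ s, coeff s v = ∑ i ∈ B, b i * l i (coeff s v) ^ p ^ e) :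
    v = ∑ a ∈ Finset.Iic (socleExponent σ (p ^ e)), ∑ i ∈ B,
      monomial a (b i) * cartierMap (p ^ e) a (l i) v ^ p ^ e := by
  have hq := expChar_pow_pos R p e
  ext s
  obtain ⟨m, a, ha, rfl⟩ := exists_eq_smul_add hq s
  simp only [coeff_sum]
  rw [hv, Finset.sum_eq_single_of_mem a (Finset.mem_Iic.2 ((le_socleExponent_iff hq).2 ha))]
  · refine Finset.sum_congr rfl fun i _ => ?_
    rw [coeff_smul_add_monomial_mul_pow ha ha, if_pos rfl, coeff_cartierMap]
  · intro a' ha' hne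
    have ha' := (le_socleExponent_iff hq).1 (Finset.mem_Iic.1 ha')
    exact Finset.sum_eq_zero fun i _ => by
      rw [coeff_smul_add_monomial_mul_pow ha ha', if_neg hne]

theorem mem_bracketPow_of_forall_cartierMap_mem [CharP R p] [Finite σ] {ι : Type*} {B : Finset ι}
    {b : ι → R} {l : ι → R →+ R} {v : MvPolynomial σ R} {J : Ideal (MvPolynomial σ R)}
    (hv : ∀ s, coeff s v = ∑ i ∈ B, b i * l i (coeff s v) ^ p ^ e)
    (hJ : ∀ a, (∀ i, a i < p ^ e) → ∀ i, cartierMap (p ^ e) a (l i) v ∈ J) :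
    v ∈ bracketPow J (p ^ e) := by
  classical
  have := Fintype.ofFinite σ
  rw [eq_sum_monomial_mul_cartierMap_pow hv]
  refine sum_mem fun a ha => sum_mem fun i _ => Ideal.mul_mem_left _ _ (pow_mem_bracketPow ?_ _)
  exact hJ a ((le_socleExponent_iff (expChar_pow_pos R p e)).1 (Finset.mem_Iic.1 ha)) i

theorem testIdeal_eq_span {k : Type*} [Field k] [CharP k p] [Finite σ] (f : MvPolynomial σ k) :
    testIdeal p f e = Ideal.span {w | ∃ a l, (∀ i, a i < p ^ e) ∧ IsCartierLinear (p ^ e) l ∧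
      cartierMap (p ^ e) a l (f ^ (p ^ e - 1)) = w} := by
  classical
  apply le_antisymm
  · obtain ⟨ι, B, b, l, hl, hb⟩ := exists_isCartierLinear_eq_sum k p e
      ((f ^ (p ^ e - 1)).support.image fun s => coeff s (f ^ (p ^ e - 1)))
    refine sInf_le (mem_bracketPow_of_forall_cartierMap_mem (B := B) (b := b) (l := l) (fun s => ?_)
      fun a ha i => Ideal.subset_span ⟨a, l i, ha, hl i, rfl⟩)
    by_cases hs : s ∈ (f ^ (p ^ e - 1)).support
    · exact hb _ (Finset.mem_image_of_mem _ hs)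
    · simp [notMem_support_iff.1 hs, zero_pow (expChar_pow_pos k p e).ne']
  · rw [Ideal.span_le]
    rintro _ ⟨a, l, ha, hl, rfl⟩
    exact (isCartierLinear_cartierMap ha hl).map_mem_testIdeal f

theorem idealOfVars_le_radical_span_testIdeal {k : Type*} [Field k] [CharP k p] [Finite σ]
    {f : MvPolynomial σ k} {d : ℕ} (hf : f.IsHomogeneous d) (hd : 0 < d)
    (hrad : idealOfVars σ k ≤ (testIdeal p f e).radical) :
    idealOfVars σ k ≤ (Ideal.span {v ∈ testIdeal p f e | v.IsHomogeneous (d - 1)}).radical := by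
  rw [testIdeal_eq_span] at hrad ⊢
  refine idealOfVars_le_radical_span_isHomogeneous ?_ hrad
  rintro _ ⟨a, l, -, -, rfl⟩
  refine ⟨_, ?_, isHomogeneous_cartierMap a l (hf.pow _)⟩
  have hq := expChar_pow_pos k p e
  rw [← Nat.lt_iff_le_pred hd, Nat.div_lt_iff_lt_mul hq]
  have hlt : d * (p ^ e - 1) < d * p ^ e := Nat.mul_lt_mul_of_pos_left (by omega) hd
  omega

end Cartier

/-! ### The bound for `M_e` -/

section Bound

theorem pow_mem_testIdeal {A : Type*} [CommRing A] {p : ℕ} (hp : p ≠ 0) (f : A) (r : ℕ) :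
    f ^ (p ^ r - 1) ∈ testIdeal p f r :=
  Ideal.mem_sInf.2 fun {I} hI => bracketPow_le_self I (pow_ne_zero r hp) hI

theorem idealOfVars_ne_bot (σ R : Type*) [CommRing R] [Nontrivial R] [Nonempty σ] :
    idealOfVars σ R ≠ ⊥ := fun h =>
  X_ne_zero (R := R) (Classical.arbitrary σ) <|
    (Submodule.eq_bot_iff _).1 h _ (Ideal.subset_span (Set.mem_range_self _))

theorem degree_pos_of_radical_testIdeal_eq {σ k : Type*} [Nonempty σ] [Field k] {p r : ℕ}
    (hp : p ≠ 0) {f : MvPolynomial σ k} {d : ℕ} (hf : f.IsHomogeneous d)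
    (hrad : (testIdeal p f r).radical = idealOfVars σ k) : 0 < d := by
  refine Nat.pos_of_ne_zero ?_
  rintro rfl
  have hv_mem : f ^ (p ^ r - 1) ∈ idealOfVars σ k ^ 1 := by
    simpa [hrad] using Ideal.le_radical (pow_mem_testIdeal hp f r)
  have hv_zero : f ^ (p ^ r - 1) = 0 := by
    rw [← homogeneousComponent_eq_self (hf.pow _), zero_mul, homogeneousComponent_zero,
      (mem_pow_idealOfVars_iff' ..).1 hv_mem 0 (by simp), C_0]
  have hτ : testIdeal p f r = ⊥ := le_bot_iff.1 <| sInf_le <| by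
    change f ^ (p ^ r - 1) ∈ bracketPow ⊥ (p ^ r)
    exact hv_zero ▸ zero_mem _
  exact idealOfVars_ne_bot σ k (by rw [← hrad, hτ, Ideal.radical_bot_of_isReduced])

theorem card_mul_pow_le_of_mem_colon_testIdeal {σ k : Type*} [Fintype σ] [Field k] {p e r : ℕ}
    [Fact p.Prime] [CharP k p] {f g : MvPolynomial σ k} {d t : ℕ} (hf : f.IsHomogeneous d)
    (hd : 0 < d) (hrad : idealOfVars σ k ≤ (testIdeal p f r).radical) (hg : g.IsHomogeneous t)
    (hgm : g ∉ bracketPow (idealOfVars σ k) (p ^ e))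
    (hgτ : g ∈ (bracketPow (idealOfVars σ k) (p ^ e)).colon (testIdeal p f r)) :
    Fintype.card σ * p ^ e ≤ t + Fintype.card σ * (d - 1) :=
  card_mul_pow_le_of_mem_colon (S := {v ∈ testIdeal p f r | v.IsHomogeneous (d - 1)})
    (fun _ hv => hv.2) (idealOfVars_le_radical_span_testIdeal hf hd hrad) hg hgm
    (Submodule.colon_mono le_rfl (Set.sep_subset ..) hgτ)

variable {k : Type*} [Field k] {p n : ℕ} [Fact p.Prime] [CharP k p]

theorem MeSet_nonempty {τ : Ideal (MvPolynomial (Fin (n + 1)) k)} (hτ : τ ≤ mxI k n) (e : ℕ) :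
    (MeSet k n p τ e).Nonempty :=
  ⟨_, monomial (socleExponent _ (p ^ e)) 1,
    Submodule.colon_mono le_rfl hτ (monomial_socleExponent_mem_colon e),
    monomial_socleExponent_notMem e, isHomogeneous_monomial _ rfl⟩

theorem delta_add_d_gt_general (r : ℕ) (f : MvPolynomial (Fin (n + 1)) k) (d : ℕ)
    (hf : f.IsHomogeneous d) (hrad : (testIdeal p f r).radical = mxI k n) (δ : ℤ)
    (hδ : ∃ E : ℕ, ∀ e ≥ E, (Me k n p (testIdeal p f r) e : ℤ) - (n + 1) * p ^ e = δ) :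
    δ + d > -(n : ℤ) * (d - 1) ∧
      ∀ e, (Me k n p (testIdeal p f r) e : ℤ) - (n + 1) * p ^ e + d > -(n : ℤ) * (d - 1) := by
  have hd : 0 < d := degree_pos_of_radical_testIdeal_eq (Fact.out : p.Prime).ne_zero hf hrad
  have hbound (e : ℕ) :
      (Me k n p (testIdeal p f r) e : ℤ) - (n + 1) * p ^ e + d > -(n : ℤ) * (d - 1) := by
    obtain ⟨g, hgτ, hgm, hg⟩ :=
      Nat.sInf_mem (MeSet_nonempty (p := p) (Ideal.le_radical.trans_eq hrad) e)
    have h : (n + 1) * p ^ e ≤ Me k n p (testIdeal p f r) e + (n + 1) * (d - 1) := by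
      simpa [Me] using card_mul_pow_le_of_mem_colon_testIdeal hf hd hrad.ge hg hgm hgτ
    zify [hd] at h
    linarith
  refine ⟨?_, hbound⟩
  obtain ⟨E, hE⟩ := hδ
  exact hE E le_rfl ▸ hbound E

end Bound

/-- If `f` is homogeneous of degree `d`, `τ(f^{1−1/p}) ⊆ m` and
`√τ(f^{1−1/p}) = m`, then `δ(f) + d > −n(d−1)`; equivalently,
`M_e − (n+1)p^e + d > −n(d−1)` for all `e ≥ e_0`. -/
theorem delta_add_d_gt {k : Type*} [Field k] {p n : ℕ} [Fact p.Prime] [CharP k p]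
    (f : MvPolynomial (Fin (n + 1)) k) (d : ℕ) (hf : f.IsHomogeneous d)
    (hτm : testIdeal p f 1 ≤ mxI k n)
    (hrad : (testIdeal p f 1).radical = mxI k n)
    (δ : ℤ)
    (hδ : ∃ E : ℕ, ∀ e ≥ E, (Me k n p (testIdeal p f 1) e : ℤ) - (n + 1) * p ^ e = δ) :
    δ + d > -(n : ℤ) * (d - 1) ∧
      ∀ e ≥ e0 k n p (testIdeal p f 1),
        (Me k n p (testIdeal p f 1) e : ℤ) - (n + 1) * p ^ e + d > -(n : ℤ) * (d - 1) :=
  (delta_add_d_gt_general 1 f d hf hrad δ hδ).imp_right fun h e _ => h e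

end
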